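/- (Equi-expressivity of INL and the declarative fragment of InqML_⟹⊙) There exist a translation (·)* from instantial neighborhood logic formulas to declaratives of L_⟹⊙ and a translation (·)⋆ from declaratives of L_⟹⊙ to instantial neighborhood logic formulas such that for every neighborhood model M (empty neighborhoods allowed), every world w, every INL-formula σ, and every declarative α of L_⟹⊙: M,w ⊨_INL σ if and only if M,w ⊨ σ*, and M,w ⊨ α if and only if M,w ⊨_INL α⋆. -/

import Mathlib

/-- Formulas of the language `L_⟹⊙` (with the modal constant `⊙`). -/
inductive FormO (P : Type) : Type
  | atom : P → FormO P
  | bot : FormO P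
  | odot : FormO P
  | and : FormO P → FormO P → FormO P
  | impl : FormO P → FormO P → FormO P
  | idisj : FormO P → FormO P → FormO P
  | yields : FormO P → FormO P → FormO P

/-- A neighborhood model (empty neighborhoods allowed). -/
structure NModel (P : Type) where
  W : Type
  ne : Nonempty W
  Nb : W → Set (Set W)
  V : W → P → Bool

/-- Support of an `L_⟹⊙` formula at an information state. -/
def supportO {P : Type} (M : NModel P) : FormO P → Set M.W → Prop
  | .atom p, s => ∀ w ∈ s, M.V w p = true
  | .bot, s => s = ∅
  | .odot, s => ∀ w ∈ s, ∅ ∈ M.Nb w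
  | .and φ ψ, s => supportO M φ s ∧ supportO M ψ s
  | .impl φ ψ, s => ∀ t : Set M.W, t ⊆ s → supportO M φ t → supportO M ψ t
  | .idisj φ ψ, s => supportO M φ s ∨ supportO M ψ s
  | .yields φ ψ, s => ∀ w ∈ s, ∀ t ∈ M.Nb w, supportO M φ t → supportO M ψ t

/-- Truth at a world. -/
def truthO {P : Type} (M : NModel P) (w : M.W) (φ : FormO P) : Prop :=
  supportO M φ {w}

/-- Declaratives of `L_⟹⊙`: `⩔` occurs only within the scope of `⟹`. -/
inductive IsDeclO {P : Type} : FormO P → Prop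
  | atom (p : P) : IsDeclO (.atom p)
  | bot : IsDeclO .bot
  | odot : IsDeclO .odot
  | and {α β : FormO P} : IsDeclO α → IsDeclO β → IsDeclO (.and α β)
  | impl {α β : FormO P} : IsDeclO α → IsDeclO β → IsDeclO (.impl α β)
  | yields (φ ψ : FormO P) : IsDeclO (.yields φ ψ)

/-- Formulas of instantial neighborhood logic: `σ ::= p | ¬σ | σ∧σ |
□(ρ₁,…,ρₙ;σ)`. -/
inductive INLForm (P : Type) : Type
  | atom : P → INLForm P
  | neg : INLForm P → INLForm P
  | and : INLForm P → INLForm P → INLForm P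
  | box : List (INLForm P) → INLForm P → INLForm P

/-- Truth of an INL formula at a world. -/
def INLTrue {P : Type} (M : NModel P) : INLForm P → M.W → Prop
  | .atom p, w => M.V w p = true
  | .neg σ, w => ¬ INLTrue M σ w
  | .and ρ σ, w => INLTrue M ρ w ∧ INLTrue M σ w
  | .box ρs σ, w => ∃ s ∈ M.Nb w, (∀ v ∈ s, INLTrue M σ v) ∧
      ∀ ρ ∈ ρs, ∃ v ∈ s, INLTrue M ρ v

namespace InlAux

/-! ### From INL to declaratives -/

mutual
def tr {P : Type} : INLForm P → FormO P
  | .atom p => .atom p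
  | .neg σ => .impl (tr σ) .bot
  | .and ρ σ => .and (tr ρ) (tr σ)
  | .box [] σ => .impl (.and (.yields (tr σ) .bot) (.impl .odot .bot)) .bot
  | .box (ρ :: ρs) σ => .impl (.yields (tr σ) (.idisj (.impl (tr ρ) .bot) (trD ρs))) .bot
def trD {P : Type} : List (INLForm P) → FormO P
  | [] => .bot
  | ρ :: ρs => .idisj (.impl (tr ρ) .bot) (trD ρs)
end

theorem tr_decl {P : Type} (σ : INLForm P) : IsDeclO (tr σ) := by
  match σ with
  | .atom p => rw [tr]; exact .atom p
  | .neg σ => rw [tr]; exact .impl (tr_decl σ) .bot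
  | .and ρ σ => rw [tr]; exact .and (tr_decl ρ) (tr_decl σ)
  | .box [] σ => rw [tr]; exact .impl (.and (.yields _ _) (.impl .odot .bot)) .bot
  | .box (ρ :: ρs) σ => rw [tr]; exact .impl (.yields _ _) .bot

theorem decl_iff {P : Type} (M : NModel P) {α : FormO P} (h : IsDeclO α) :
    ∀ s : Set M.W, supportO M α s ↔ ∀ w ∈ s, truthO M w α := by
  unfold truthO
  induction h with
  | atom p => intro s; simp [supportO]
  | bot => intro s; simp [supportO, Set.eq_empty_iff_forall_notMem]
  | odot => intro s; simp [supportO]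
  | and _ _ ha hb =>
    intro s
    simp only [supportO]
    rw [ha s, hb s]
    exact ⟨fun h w hw => ⟨h.1 w hw, h.2 w hw⟩, fun h => ⟨fun w hw => (h w hw).1, fun w hw => (h w hw).2⟩⟩
  | impl _ _ ha hb =>
    intro s
    simp only [supportO]
    constructor
    · intro h w hw t ht
      exact h t (ht.trans (by simpa using hw))
    · intro h t ht hta
      rw [hb t]
      intro w hw
      exact h w (ht hw) {w} subset_rfl ((ha t).1 hta w hw)
  | yields φ ψ => intro s; simp [supportO]

theorem truth_neg {P : Type} (M : NModel P) {α : FormO P} (w : M.W) :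
    truthO M w (.impl α .bot) ↔ ¬ truthO M w α := by
  unfold truthO
  simp only [supportO]
  constructor
  · intro h h2
    simpa using h {w} subset_rfl h2
  · intro h t ht h2
    rcases Set.subset_singleton_iff_eq.1 ht with rfl | rfl
    · rfl
    · exact absurd h2 h

theorem support_neg {P : Type} (M : NModel P) {α : FormO P} (ha : IsDeclO α) (s : Set M.W) :
    supportO M (.impl α .bot) s ↔ ∀ w ∈ s, ¬ truthO M w α := by
  rw [decl_iff M (.impl ha .bot)]
  simp only [truth_neg]

theorem trD_iff {P : Type} (M : NModel P) (ρs : List (INLForm P)) (s : Set M.W) :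
    supportO M (trD ρs) s ↔ s = ∅ ∨ ∃ ρ ∈ ρs, ∀ w ∈ s, ¬ truthO M w (tr ρ) := by
  induction ρs with
  | nil => simp [trD, supportO]
  | cons ρ ρs ih =>
    rw [trD, supportO, support_neg M (tr_decl ρ), ih]
    simp only [List.mem_cons, exists_eq_or_imp]
    tauto

theorem tr_iff {P : Type} (M : NModel P) (σ : INLForm P) (w : M.W) :
    INLTrue M σ w ↔ truthO M w (tr σ) := by
  match σ with
  | .atom p => simp [tr, INLTrue, truthO, supportO]
  | .neg σ => rw [tr, truth_neg, INLTrue, tr_iff M σ w]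
  | .and ρ σ =>
    rw [tr, INLTrue, tr_iff M ρ w, tr_iff M σ w]
    rfl
  | .box [] σ =>
    have e : truthO M w (.and (.yields (tr σ) .bot) (.impl .odot .bot)) ↔
      truthO M w (.yields (tr σ) .bot) ∧ truthO M w (.impl .odot .bot) := Iff.rfl
    rw [tr, truth_neg, e, truth_neg, INLTrue]
    simp only [truthO, supportO, Set.mem_singleton_iff, forall_eq, List.not_mem_nil, false_imp_iff,
      implies_true, and_true]
    simp only [decl_iff M (tr_decl σ), fun v => tr_iff M σ v]
    constructor
    · rintro ⟨s, hs, h⟩ ⟨h1, h2⟩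
      have := h1 s hs h
      subst this
      exact h2 hs
    · intro h
      by_cases h0 : ∅ ∈ M.Nb w
      · exact ⟨∅, h0, by simp⟩
      · by_contra hc
        exact h ⟨fun t ht h3 => absurd ⟨t, ht, h3⟩ hc, h0⟩
  | .box (ρ :: ρs) σ =>
    have ih1 := fun v => tr_iff M σ v
    have ih2 : ∀ ρ' ∈ ρ :: ρs, ∀ v, INLTrue M ρ' v ↔ truthO M v (tr ρ') :=
      fun ρ' hρ v => tr_iff M ρ' v
    have key : ∀ t : Set M.W, supportO M (.idisj (.impl (tr ρ) .bot) (trD ρs)) t ↔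
        ∃ ρ' ∈ ρ :: ρs, ∀ v ∈ t, ¬ INLTrue M ρ' v := by
      intro t
      have h := trD_iff M (ρ :: ρs) t
      rw [trD] at h
      rw [h]
      constructor
      · rintro (rfl | ⟨ρ', h1, h2⟩)
        · exact ⟨ρ, by simp, by simp⟩
        · exact ⟨ρ', h1, fun v hv => by rw [ih2 _ h1]; exact h2 v hv⟩
      · rintro ⟨ρ', h1, h2⟩
        exact Or.inr ⟨ρ', h1, fun v hv => by rw [← ih2 _ h1]; exact h2 v hv⟩
    have e : truthO M w (.yields (tr σ) (.idisj (.impl (tr ρ) .bot) (trD ρs))) ↔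
      ∀ t ∈ M.Nb w, supportO M (tr σ) t →
        supportO M (.idisj (.impl (tr ρ) .bot) (trD ρs)) t := by
      rw [truthO, supportO]; simp
    rw [tr, truth_neg, e, INLTrue]
    simp only [key, decl_iff M (tr_decl σ), ih1]
    push Not
    rfl
termination_by sizeOf σ
decreasing_by
  all_goals simp_wf
  all_goals first
    | omega
    | (have := List.sizeOf_lt_of_mem hρ; simp at this; omega)

/-! ### From formulas to INL: resolutions -/

section
variable {P : Type} (p : P)

def ibot : INLForm P := .and (.atom p) (.neg (.atom p))
def itop : INLForm P := .neg (ibot p)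
def iimp (ρ σ : INLForm P) : INLForm P := .neg (.and ρ (.neg σ))
def iconj : List (INLForm P) → INLForm P
  | [] => itop p
  | ρ :: ρs => .and ρ (iconj ρs)
def implR : List (INLForm P) → List (INLForm P) → List (INLForm P)
  | [], _ => [itop p]
  | ρ :: A, B => B.flatMap fun τ => (implR A B).map fun χ => .and (iimp ρ τ) χ
def res : FormO P → List (INLForm P)
  | .atom q => [.atom q]
  | .bot => [ibot p]
  | .odot => [.box [] (ibot p)]
  | .and φ ψ => (res φ).flatMap fun ρ => (res ψ).map fun τ => .and ρ τ
  | .idisj φ ψ => res φ ++ res ψ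
  | .impl φ ψ => implR p (res φ) (res ψ)
  | .yields φ ψ =>
    [iconj p ((res φ).map fun ρ => .neg (.box ((res ψ).map .neg) ρ))]

variable (M : NModel P)

theorem ibot_iff (w : M.W) : INLTrue M (ibot p) w ↔ False := by
  simp [ibot, INLTrue]
theorem itop_iff (w : M.W) : INLTrue M (itop p) w ↔ True := by
  simp [itop, INLTrue, ibot_iff]
theorem iimp_iff (ρ σ : INLForm P) (w : M.W) :
    INLTrue M (iimp ρ σ) w ↔ (INLTrue M ρ w → INLTrue M σ w) := by
  simp [iimp, INLTrue]
theorem iconj_iff (l : List (INLForm P)) (w : M.W) :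
    INLTrue M (iconj p l) w ↔ ∀ ρ ∈ l, INLTrue M ρ w := by
  induction l with
  | nil => simp [iconj, itop_iff]
  | cons a l ih => simp [iconj, INLTrue, ih]

theorem implR_iff (A B : List (INLForm P)) (s : Set M.W) :
    (∃ χ ∈ implR p A B, ∀ v ∈ s, INLTrue M χ v) ↔
      ∀ ρ ∈ A, ∃ τ ∈ B, ∀ v ∈ s, INLTrue M ρ v → INLTrue M τ v := by
  induction A with
  | nil => simp [implR, itop_iff]
  | cons a A ih =>
    rw [List.forall_mem_cons, ← ih]
    simp only [implR, List.mem_flatMap, List.mem_map]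
    constructor
    · rintro ⟨_, ⟨τ, hτ, χ, hχ, rfl⟩, h⟩
      simp only [INLTrue, iimp_iff] at h
      exact ⟨⟨τ, hτ, fun v hv => (h v hv).1⟩, ⟨χ, hχ, fun v hv => (h v hv).2⟩⟩
    · rintro ⟨⟨τ, hτ, h1⟩, ⟨χ, hχ, h2⟩⟩
      refine ⟨_, ⟨τ, hτ, χ, hχ, rfl⟩, ?_⟩
      intro v hv
      simp only [INLTrue, iimp_iff]
      exact ⟨h1 v hv, h2 v hv⟩

theorem res_iff (φ : FormO P) : ∀ s : Set M.W,
    supportO M φ s ↔ ∃ ρ ∈ res p φ, ∀ v ∈ s, INLTrue M ρ v := by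
  induction φ with
  | atom q => intro s; simp [supportO, res, INLTrue]
  | bot => intro s; simp [supportO, res, ibot_iff, Set.eq_empty_iff_forall_notMem]
  | odot =>
    intro s
    simp [supportO, res, INLTrue, ibot_iff, ← Set.eq_empty_iff_forall_notMem]
  | and φ ψ h1 h2 =>
    intro s
    rw [supportO, h1, h2]
    simp only [res, List.mem_flatMap, List.mem_map]
    constructor
    · rintro ⟨⟨ρ, hρ, h1⟩, ⟨τ, hτ, h2⟩⟩
      refine ⟨_, ⟨ρ, hρ, τ, hτ, rfl⟩, ?_⟩
      intro v hv
      rw [INLTrue]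
      exact ⟨h1 v hv, h2 v hv⟩
    · rintro ⟨_, ⟨ρ, hρ, τ, hτ, rfl⟩, h⟩
      simp only [INLTrue] at h
      exact ⟨⟨ρ, hρ, fun v hv => (h v hv).1⟩, ⟨τ, hτ, fun v hv => (h v hv).2⟩⟩
  | idisj φ ψ h1 h2 =>
    intro s
    rw [supportO, h1, h2]
    simp only [res, List.mem_append, or_and_right, exists_or]
  | impl φ ψ h1 h2 =>
    intro s
    rw [supportO, res, implR_iff]
    constructor
    · intro h ρ hρ
      obtain ⟨τ, hτ, h3⟩ := (h2 _).1 (h {v | v ∈ s ∧ INLTrue M ρ v} (fun v hv => hv.1)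
        ((h1 _).2 ⟨ρ, hρ, fun v hv => hv.2⟩))
      exact ⟨τ, hτ, fun v hv hr => h3 v ⟨hv, hr⟩⟩
    · intro h t ht h3
      obtain ⟨ρ, hρ, h4⟩ := (h1 _).1 h3
      obtain ⟨τ, hτ, h5⟩ := h ρ hρ
      exact (h2 _).2 ⟨τ, hτ, fun v hv => h5 v (ht hv) (h4 v hv)⟩
  | yields φ ψ h1 h2 =>
    intro s
    simp only [supportO, res, List.mem_singleton, exists_eq_left, iconj_iff, List.forall_mem_map,
      INLTrue, h1, h2]
    refine forall₂_congr fun w _ => ?_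
    constructor
    · rintro h ρ hρ ⟨t, ht, h3, h4⟩
      obtain ⟨τ, hτ, h5⟩ := h t ht ⟨ρ, hρ, h3⟩
      obtain ⟨v, hv, h6⟩ := h4 τ hτ
      exact h6 (h5 v hv)
    · rintro h t ht ⟨ρ, hρ, h3⟩
      by_contra hc
      push Not at hc
      exact h ρ hρ ⟨t, ht, h3, hc⟩

def tr2 (φ : FormO P) : INLForm P := .neg (iconj p ((res p φ).map .neg))

theorem tr2_iff (φ : FormO P) (w : M.W) : truthO M w φ ↔ INLTrue M (tr2 p φ) w := by
  rw [truthO, res_iff p, tr2, INLTrue, iconj_iff]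
  simp [INLTrue]

end

end InlAux

/-- INL and the declarative fragment of `InqML_⟹⊙` are
equi-expressive: there are truth-preserving translations in both directions. -/
theorem inl_equiexpressive {P : Type} [Nonempty P] :
    ∃ (tr₁ : INLForm P → FormO P) (tr₂ : FormO P → INLForm P),
      (∀ σ : INLForm P, IsDeclO (tr₁ σ)) ∧
      (∀ (M : NModel P) (w : M.W) (σ : INLForm P),
        INLTrue M σ w ↔ truthO M w (tr₁ σ)) ∧
      (∀ (M : NModel P) (w : M.W) (α : FormO P), IsDeclO α →
        (truthO M w α ↔ INLTrue M (tr₂ α) w)) := by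
  exact ⟨InlAux.tr, InlAux.tr2 (Classical.arbitrary P), InlAux.tr_decl,
    fun M w σ => InlAux.tr_iff M σ w, fun M w α _ => InlAux.tr2_iff _ M α w⟩
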